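/- For every n ≥ 3, the matrix Q̂ᵀ L_n is upper triangular with strictly positive diagonal entries. Consequently, Q_n := Q̂ D̂^{−1/2} is an orthogonal matrix and is the orthogonal factor of the QR factorization of L_n (with upper triangular factor having positive diagonal): L_n = Q_n R with R = D̂^{−1/2} Q̂ᵀ L_n upper triangular with positive diagonal. -/

import Mathlib

open Matrix Filter

/-- Gaussian-elimination intermediate entry `A^{(k+1)}_{ij}` (0-indexed step `k`):
the Schur complement of the leading `k × k` block. -/
noncomputable def geEntry {n : ℕ} (A : Matrix (Fin n) (Fin n) ℝ) (k i j : Fin n) : ℝ :=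
  A i j - ∑ a : Fin k.val, ∑ b : Fin k.val,
    A i (Fin.castLE k.isLt.le a) *
      (A.submatrix (Fin.castLE k.isLt.le) (Fin.castLE k.isLt.le))⁻¹ a b *
      A (Fin.castLE k.isLt.le b) j

/-- `A` is PP: at each GE step the pivot dominates its column. -/
def IsPP {n : ℕ} (A : Matrix (Fin n) (Fin n) ℝ) : Prop :=
  ∀ k i : Fin n, k ≤ i → |geEntry A k i k| ≤ |geEntry A k k k|

/-- `A` is CP: at each GE step the pivot dominates the whole untriangularized block. -/
def IsCP {n : ℕ} (A : Matrix (Fin n) (Fin n) ℝ) : Prop :=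
  ∀ k i j : Fin n, k ≤ i → k ≤ j → |geEntry A k i j| ≤ |geEntry A k k k|

/-- Maximal absolute Gaussian-elimination intermediate entry of `A`. -/
noncomputable def maxGE {n : ℕ} (A : Matrix (Fin n) (Fin n) ℝ) : ℝ :=
  ⨆ k : Fin n, ⨆ i : {i : Fin n // k ≤ i}, ⨆ j : {j : Fin n // k ≤ j},
    |geEntry A k i.1 j.1|

/-- `max_{i,j} |A_{ij}|`. -/
noncomputable def maxAbs {n : ℕ} (A : Matrix (Fin n) (Fin n) ℝ) : ℝ :=
  ⨆ i, ⨆ j, |A i j|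

/-- Growth factor `ρ(A)`. -/
noncomputable def growth {n : ℕ} (A : Matrix (Fin n) (Fin n) ℝ) : ℝ :=
  maxGE A / maxAbs A

/-- `P` is a permutation matrix. -/
def IsPermMatrix {n : ℕ} (P : Matrix (Fin n) (Fin n) ℝ) : Prop :=
  ∃ σ : Equiv.Perm (Fin n), P = σ.permMatrix ℝ

/-- `D` is a diagonal matrix with diagonal entries `±1`. -/
def IsSignDiag {n : ℕ} (D : Matrix (Fin n) (Fin n) ℝ) : Prop :=
  (∀ i j, i ≠ j → D i j = 0) ∧ (∀ i, D i i = 1 ∨ D i i = -1)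

/-- Wilkinson's unipotent lower triangular matrix `L_n`. -/
def Lmat (n : ℕ) : Matrix (Fin n) (Fin n) ℝ :=
  fun i j => if i = j then 1 else if j < i then -1 else 0

/-- Wilkinson's upper triangular factor `U_n`. -/
def Umat (n : ℕ) : Matrix (Fin n) (Fin n) ℝ :=
  fun i j => if (j : ℕ) = n - 1 then 2 ^ (i : ℕ) else if i = j then 1 else 0

/-- Wilkinson's worst-case GEPP growth matrix `A_n`. -/
def Amat (n : ℕ) : Matrix (Fin n) (Fin n) ℝ :=
  fun i j =>
    if (j : ℕ) = n - 1 ∧ (i : ℕ) < n - 1 then 1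
    else if i = j then 1
    else if j < i then -1
    else 0

/-- `α_j = 1 + (2/3)(4^{j-1} - 1)` (1-indexed `j`). -/
noncomputable def alpha (j : ℕ) : ℝ := 1 + 2 / 3 * (4 ^ (j - 1) - 1)

/-- The unnormalized orthogonal factor `Q̂` (columns of `Qhat n` are, 1-indexed,
the columns described in the paper; here 0-indexed). -/
noncomputable def Qhat (n : ℕ) : Matrix (Fin n) (Fin n) ℝ :=
  fun i j =>
    if (j : ℕ) = n - 1 then
      if (i : ℕ) = n - 1 then 1 else 2 ^ (n - 2 - (i : ℕ))
    else if (j : ℕ) = n - 2 then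
      if (i : ℕ) = n - 2 then 1 else if (i : ℕ) = n - 1 then -1 else 0
    else if (i : ℕ) < (j : ℕ) then
      -((n : ℝ) - (j : ℕ) - 2) * 2 ^ ((j : ℕ) - (i : ℕ) - 1)
    else if (i : ℕ) = (j : ℕ) then
      ((n : ℝ) - (j : ℕ) - 1) * (alpha ((j : ℕ) + 1) - 1) + 1
    else -alpha ((j : ℕ) + 1)

/-- The diagonal normalization matrix `D̂`. -/
noncomputable def Dhat (n : ℕ) : Matrix (Fin n) (Fin n) ℝ :=
  Matrix.diagonal fun j =>
    if (j : ℕ) = 0 then (n : ℝ)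
    else if (j : ℕ) = n - 2 then 2
    else if (j : ℕ) = n - 1 then 2 * alpha (n - 1)
    else ((n : ℝ) - (j : ℕ) - 1) ^ 2 * (alpha ((j : ℕ) + 1) - 1) ^ 2 *
        (2 * alpha ((j : ℕ) + 1) - 1) / (2 * alpha ((j : ℕ) + 1) - 2) +
      ((n : ℝ) - (j : ℕ) - 1) * (alpha ((j : ℕ) + 1) ^ 2 + alpha ((j : ℕ) + 1) - 1) +
      2 * alpha (j : ℕ)

/-- `Q_n = Q̂ D̂^{-1/2}`, the orthogonal QR factor of `L_n`. -/
noncomputable def Qmat (n : ℕ) : Matrix (Fin n) (Fin n) ℝ :=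
  Qhat n * Matrix.diagonal fun m => (Real.sqrt (Dhat n m m))⁻¹

/-- Frobenius norm. -/
noncomputable def frobNorm {n : ℕ} (M : Matrix (Fin n) (Fin n) ℝ) : ℝ :=
  Real.sqrt (∑ i, ∑ j, M i j ^ 2)

/-- The Givens rotation `G(θ, i, j)`. -/
noncomputable def givens (n : ℕ) (θ : ℝ) (i j : Fin n) : Matrix (Fin n) (Fin n) ℝ :=
  fun a b =>
    if a = i ∧ b = i then Real.cos θ
    else if a = j ∧ b = j then Real.cos θ
    else if a = i ∧ b = j then -Real.sin θ
    else if a = j ∧ b = i then Real.sin θ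
    else if a = b then 1 else 0

/-- The ordered product of Givens rotations `Q(θ) = ∏_{i=1}^{n-1} ∏_{j=i+1}^n G(θ_{ij}, i, j)`. -/
noncomputable def QofTheta (n : ℕ) (θ : Fin n → Fin n → ℝ) : Matrix (Fin n) (Fin n) ℝ :=
  ((List.finRange n).map fun i =>
    (((List.finRange n).filter fun j => decide (i < j)).map fun j =>
      givens n (θ i j) i j).prod).prod

/-!
An upper triangular `C` with `A * C = Q` says that the `j`-th column of `Q` is spanned by the
columns of `A` up to the `j`-th, and `Qᵀ * A` upper triangular says that it is orthogonal to the
earlier ones. Then `Qᵀ * Q = (Qᵀ * A) * C` is upper triangular and symmetric, hence diagonal, and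
its diagonal is the product of those of `Qᵀ * A` and `C`. For `A = L_n` and `Q = Q̂` the matrix `C`
is explicit, and the diagonal so obtained is `D̂`.

The formula for the columns `j ≤ n - 2` of `Q̂` also gives column `n`, and `α_{n-1}` times column
`n - 1`.
-/

section UpperTriangular

variable {ι R : Type*} [LinearOrder ι]

lemma mul_apply_self_of_isUpperTriangular [Fintype ι] [NonUnitalNonAssocSemiring R]
    {M N : Matrix ι ι R} (hM : M.IsUpperTriangular) (hN : N.IsUpperTriangular) (i : ι) :
    (M * N) i i = M i i * N i i := by
  rw [mul_apply]
  refine Finset.sum_eq_single i (fun k _ hk => ?_) (by simp)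
  rcases hk.lt_or_gt with hki | hik
  · rw [hM hki, zero_mul]
  · rw [hN hik, mul_zero]

lemma eq_diagonal_of_isUpperTriangular_of_isSymm [Zero R] {M : Matrix ι ι R}
    (hM : M.IsUpperTriangular) (hsymm : M.IsSymm) : M = diagonal fun i => M i i := by
  ext i j
  rcases lt_trichotomy i j with hij | rfl | hji
  · rw [diagonal_apply_ne _ hij.ne, ← hsymm.apply, hM hij]
  · rw [diagonal_apply_eq]
  · rw [diagonal_apply_ne _ hji.ne', hM hji]

theorem transpose_mul_self_eq_diagonal [Fintype ι] [CommSemiring R] {A Q C : Matrix ι ι R}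
    (hQA : (Qᵀ * A).IsUpperTriangular) (hC : C.IsUpperTriangular) (hAC : A * C = Q) :
    Qᵀ * Q = diagonal fun i => (Qᵀ * A) i i * C i i := by
  have hgram : Qᵀ * Q = Qᵀ * A * C := by rw [Matrix.mul_assoc, hAC]
  have hupper : (Qᵀ * Q).IsUpperTriangular := hgram ▸ hQA.mul hC
  rw [eq_diagonal_of_isUpperTriangular_of_isSymm hupper (isSymm_transpose_mul_self Q), hgram]
  simp_rw [mul_apply_self_of_isUpperTriangular hQA hC]

end UpperTriangular

lemma transpose_mul_self_normalized_eq_one {ι κ : Type*} [Fintype ι] [Fintype κ] [DecidableEq κ]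
    {Q : Matrix ι κ ℝ} {δ : κ → ℝ} (hδ : ∀ j, 0 < δ j) (hQ : Qᵀ * Q = diagonal δ) :
    (Q * diagonal fun j => (√(δ j))⁻¹)ᵀ * (Q * diagonal fun j => (√(δ j))⁻¹) = 1 := by
  rw [transpose_mul, diagonal_transpose, Matrix.mul_assoc, ← Matrix.mul_assoc Qᵀ, hQ,
    diagonal_mul_diagonal, diagonal_mul_diagonal, ← diagonal_one]
  congr 1
  ext j
  have hsqrt : √(δ j) ≠ 0 := (Real.sqrt_pos.2 (hδ j)).ne'
  field_simp
  exact (Real.sq_sqrt (hδ j).le).symm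

section FinSums

variable {M : Type*} [AddCommMonoid M] {n : ℕ}

lemma sum_Ioi_fin_eq_sum_Ico (f : ℕ → M) (i : Fin n) :
    ∑ k ∈ Finset.Ioi i, f k = ∑ k ∈ Finset.Ico (i + 1 : ℕ) n, f k := by
  rw [Finset.Ico_add_one_left_eq_Ioo, ← Fin.map_valEmbedding_Ioi, Finset.sum_map]
  rfl

lemma sum_Iio_fin_eq_sum_range (f : ℕ → M) (i : Fin n) :
    ∑ k ∈ Finset.Iio i, f k = ∑ k ∈ Finset.range i, f k := by
  rw [← Nat.Iio_eq_range, ← Fin.map_valEmbedding_Iio, Finset.sum_map]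
  rfl

end FinSums

lemma mul_Lmat_apply {m : Type*} {n : ℕ} (A : Matrix m (Fin n) ℝ) (i : m) (j : Fin n) :
    (A * Lmat n) i j = A i j - ∑ k ∈ Finset.Ioi j, A i k := by
  have hterm (k : Fin n) : A i k * Lmat n k j =
      (if k = j then A i k else 0) - if j < k then A i k else 0 := by
    rcases lt_trichotomy k j with hkj | rfl | hjk
    · simp [Lmat, hkj.ne, hkj.not_gt]
    · simp [Lmat]
    · simp [Lmat, hjk, hjk.ne']
  simp [mul_apply, hterm, ← Finset.sum_filter, Finset.filter_lt_eq_Ioi]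

lemma Lmat_mul_apply {m : Type*} {n : ℕ} (A : Matrix (Fin n) m ℝ) (i : Fin n) (j : m) :
    (Lmat n * A) i j = A i j - ∑ k ∈ Finset.Iio i, A k j := by
  have hterm (k : Fin n) : Lmat n i k * A k j =
      (if i = k then A k j else 0) - if k < i then A k j else 0 := by
    rcases lt_trichotomy k i with hki | rfl | hik
    · simp [Lmat, hki, hki.ne']
    · simp [Lmat]
    · simp [Lmat, hik.ne, hik.not_gt]
  simp [mul_apply, hterm, ← Finset.sum_filter, Finset.filter_gt_eq_Iio]

lemma one_le_alpha (j : ℕ) : 1 ≤ alpha j := by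
  have hpow : (1 : ℝ) ≤ 4 ^ (j - 1) := one_le_pow₀ (by norm_num)
  unfold alpha
  linarith

lemma alpha_pos (j : ℕ) : 0 < alpha j := one_pos.trans_le (one_le_alpha j)

lemma alpha_one : alpha 1 = 1 := by simp [alpha]

lemma alpha_add_two (j : ℕ) : alpha (j + 2) = 4 * alpha (j + 1) - 1 := by
  simp only [alpha, Nat.add_sub_cancel, show j + 2 - 1 = j + 1 from rfl, pow_succ]
  ring

/-- The factor by which the 0-indexed column `j` of `Q̂` differs from the general column formula
`generalEntry`; only the penultimate column needs one. -/
noncomputable def colScale (n j : ℕ) : ℝ :=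
  if j + 2 = n then (alpha (j + 1))⁻¹ else 1

/-- The formula for the entries of `Q̂` in the 1-indexed columns `j ≤ n - 2`, extended to all
columns. Here `i` and `j` are 0-indexed, and natural numbers rather than elements of `Fin n` so that
partial sums of a column can be computed by induction. -/
noncomputable def generalEntry (n i j : ℕ) : ℝ :=
  if i < j then -((n : ℝ) - j - 2) * 2 ^ (j - i - 1)
  else if i = j then ((n : ℝ) - j - 1) * (alpha (j + 1) - 1) + 1
  else -alpha (j + 1)

/-- The coordinates, in the columns of `L_n`, of the columns with entries `generalEntry`. They come
from forward substitution. -/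
noncomputable def generalCoord (n i j : ℕ) : ℝ :=
  if i < j then -((n : ℝ) - j - 2) * 2 ^ (j - i - 1) * alpha (i + 1)
  else if i = j then (((n : ℝ) - j - 1) * (alpha (j + 1) - 1) + 1 + alpha (j + 1)) / 2
  else 0

/-- The matrix `L_n⁻¹ Q̂` of coordinates of the columns of `Q̂` in the columns of `L_n`. -/
noncomputable def Cmat (n : ℕ) : Matrix (Fin n) (Fin n) ℝ :=
  fun i j => colScale n j * generalCoord n i j

section GeneralColumn

variable {n i j : ℕ}

lemma generalEntry_of_lt (hij : i < j) :
    generalEntry n i j = -((n : ℝ) - j - 2) * 2 ^ (j - i - 1) := by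
  simp [generalEntry, hij]

lemma generalEntry_self :
    generalEntry n j j = ((n : ℝ) - j - 1) * (alpha (j + 1) - 1) + 1 := by
  simp [generalEntry]

lemma generalEntry_of_gt (hji : j < i) : generalEntry n i j = -alpha (j + 1) := by
  simp [generalEntry, hji.ne', hji.not_gt]

lemma generalCoord_of_lt (hij : i < j) :
    generalCoord n i j = -((n : ℝ) - j - 2) * 2 ^ (j - i - 1) * alpha (i + 1) := by
  simp [generalCoord, hij]

lemma generalCoord_self : generalCoord n j j =
    (((n : ℝ) - j - 1) * (alpha (j + 1) - 1) + 1 + alpha (j + 1)) / 2 := by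
  simp [generalCoord]

lemma generalCoord_of_gt (hji : j < i) : generalCoord n i j = 0 := by
  simp [generalCoord, hji.ne', hji.not_gt]

lemma sum_Ico_generalEntry_self (hj : j < n) :
    ∑ k ∈ Finset.Ico (j + 1) n, generalEntry n k j = -(((n : ℝ) - j - 1) * alpha (j + 1)) := by
  rw [Finset.sum_congr rfl fun k hk => generalEntry_of_gt (Finset.mem_Ico.1 hk).1,
    Finset.sum_const, Nat.card_Ico, nsmul_eq_mul, Nat.cast_sub hj]
  push_cast
  ring

lemma sum_Ico_generalEntry_of_lt (hij : i < j) (hj : j < n) :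
    ∑ k ∈ Finset.Ico (i + 1) n, generalEntry n k j = generalEntry n i j := by
  obtain ⟨m, rfl⟩ := Nat.exists_eq_add_of_lt hij
  clear hij
  induction m generalizing i with
  | zero =>
    rw [Finset.sum_eq_sum_Ico_succ_bot (by omega), add_zero, sum_Ico_generalEntry_self (by omega),
      generalEntry_self, generalEntry_of_lt (by omega), Nat.add_sub_cancel_left]
    push_cast
    ring
  | succ m ih =>
    have hdouble : generalEntry n i (i + 1 + m + 1) =
        2 * generalEntry n (i + 1) (i + 1 + m + 1) := by
      rw [generalEntry_of_lt (by omega), generalEntry_of_lt (by omega),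
        show i + 1 + m + 1 - i - 1 = m + 1 by omega,
        show i + 1 + m + 1 - (i + 1) - 1 = m by omega, pow_succ]
      ring
    rw [show i + (m + 1) + 1 = i + 1 + m + 1 by omega] at hj ⊢
    rw [Finset.sum_eq_sum_Ico_succ_bot (by omega), ih hj, hdouble, two_mul]

lemma generalEntry_zero_left (n j : ℕ) : generalEntry n 0 j = generalCoord n 0 j := by
  rcases j.eq_zero_or_pos with rfl | hj
  · rw [generalEntry_self, generalCoord_self, zero_add, alpha_one]
    ring
  · rw [generalEntry_of_lt hj, generalCoord_of_lt hj, zero_add, alpha_one, mul_one]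

/-- Row `i + 1` of `L_n` minus row `i` is `e_{i+1} - 2 e_i`. -/
lemma generalEntry_succ_sub (n i j : ℕ) :
    generalEntry n (i + 1) j - generalEntry n i j =
      generalCoord n (i + 1) j - 2 * generalCoord n i j := by
  rcases lt_trichotomy i j with hij | rfl | hji
  · obtain ⟨m, rfl⟩ := Nat.exists_eq_add_of_lt hij
    rw [generalEntry_of_lt hij, generalCoord_of_lt hij]
    rcases m with _ | m
    · rw [add_zero, generalEntry_self, generalCoord_self, Nat.add_sub_cancel_left, alpha_add_two]
      push_cast
      ring
    · rw [generalEntry_of_lt (by omega), generalCoord_of_lt (by omega), alpha_add_two,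
        show i + (m + 1) + 1 - i - 1 = m + 1 by omega,
        show i + (m + 1) + 1 - (i + 1) - 1 = m by omega, pow_succ]
      ring
  · rw [generalEntry_of_gt i.lt_succ_self, generalEntry_self, generalCoord_self,
      generalCoord_of_gt i.lt_succ_self]
    ring
  · rw [generalEntry_of_gt hji, generalEntry_of_gt (by omega), generalCoord_of_gt hji,
      generalCoord_of_gt (by omega)]
    ring

lemma generalCoord_sub_sum_range (n i j : ℕ) :
    generalCoord n i j - ∑ k ∈ Finset.range i, generalCoord n k j = generalEntry n i j := by
  induction i with
  | zero => rw [Finset.sum_range_zero, sub_zero, generalEntry_zero_left]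
  | succ i ih =>
    rw [Finset.sum_range_succ]
    linear_combination ih - generalEntry_succ_sub n i j

end GeneralColumn

lemma colScale_pos (n j : ℕ) : 0 < colScale n j := by
  unfold colScale
  split_ifs
  · exact inv_pos.2 (alpha_pos _)
  · exact one_pos

lemma colScale_of_add_two_eq {n j : ℕ} (hj : j + 2 = n) : colScale n j = (alpha (j + 1))⁻¹ :=
  if_pos hj

lemma colScale_of_add_two_ne {n j : ℕ} (hj : j + 2 ≠ n) : colScale n j = 1 :=
  if_neg hj

lemma Qhat_apply_last {n : ℕ} {i j : Fin n} (hj : (j : ℕ) + 1 = n) :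
    Qhat n i j = generalEntry n i j := by
  have hn : (n : ℝ) = j + 1 := mod_cast hj.symm
  rw [Qhat, if_pos (by omega)]
  rcases (show (i : ℕ) ≤ j by omega).lt_or_eq with hij | hij
  · rw [if_neg (by omega), generalEntry_of_lt hij, show n - 2 - (i : ℕ) = j - i - 1 by omega, hn]
    ring
  · rw [if_pos (by omega), hij, generalEntry_self, hn]
    ring

lemma Qhat_apply_penultimate {n : ℕ} {i j : Fin n} (hj : (j : ℕ) + 2 = n) :
    alpha (j + 1) * Qhat n i j = generalEntry n i j := by
  have hn : (n : ℝ) = j + 2 := mod_cast hj.symm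
  rw [Qhat, if_neg (by omega), if_pos (by omega)]
  rcases lt_trichotomy (i : ℕ) j with hij | hij | hji
  · rw [if_neg (by omega), if_neg (by omega), generalEntry_of_lt hij, hn]
    ring
  · rw [if_pos (by omega), hij, generalEntry_self, hn]
    ring
  · rw [if_neg (by omega), if_pos (by omega), generalEntry_of_gt hji]
    ring

lemma Qhat_apply (n : ℕ) (i j : Fin n) : Qhat n i j = colScale n j * generalEntry n i j := by
  by_cases hpen : (j : ℕ) + 2 = n
  · have hα : alpha (j + 1) ≠ 0 := (alpha_pos _).ne'
    rw [colScale_of_add_two_eq hpen, ← Qhat_apply_penultimate hpen, inv_mul_cancel_left₀ hα]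
  · rw [colScale_of_add_two_ne hpen, one_mul]
    by_cases hlast : (j : ℕ) + 1 = n
    · exact Qhat_apply_last hlast
    · rw [Qhat, if_neg (by omega), if_neg (by omega), generalEntry]

lemma isUpperTriangular_Cmat (n : ℕ) : (Cmat n).IsUpperTriangular :=
  fun _ _ hji => mul_eq_zero_of_right _ (generalCoord_of_gt hji)

theorem Lmat_mul_Cmat (n : ℕ) : Lmat n * Cmat n = Qhat n := by
  ext i j
  simp only [Lmat_mul_apply, Cmat, Qhat_apply, ← Finset.mul_sum, ← mul_sub]
  rw [sum_Iio_fin_eq_sum_range (generalCoord n · j), generalCoord_sub_sum_range]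

lemma Qhat_transpose_mul_Lmat_apply (n : ℕ) (i j : Fin n) :
    ((Qhat n)ᵀ * Lmat n) i j = colScale n i *
      (generalEntry n j i - ∑ k ∈ Finset.Ico (j + 1 : ℕ) n, generalEntry n k i) := by
  simp only [mul_Lmat_apply, transpose_apply, Qhat_apply, ← Finset.mul_sum, ← mul_sub]
  rw [sum_Ioi_fin_eq_sum_Ico (generalEntry n · i)]

theorem isUpperTriangular_Qhat_transpose_mul_Lmat (n : ℕ) :
    ((Qhat n)ᵀ * Lmat n).IsUpperTriangular := fun i j (hji : j < i) => by
  rw [Qhat_transpose_mul_Lmat_apply, sum_Ico_generalEntry_of_lt hji i.isLt, sub_self, mul_zero]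

lemma Qhat_transpose_mul_Lmat_apply_self (n : ℕ) (i : Fin n) :
    ((Qhat n)ᵀ * Lmat n) i i =
      colScale n i * (((n : ℝ) - i - 1) * (2 * alpha (i + 1) - 1) + 1) := by
  rw [Qhat_transpose_mul_Lmat_apply, sum_Ico_generalEntry_self i.isLt, generalEntry_self]
  ring

lemma Cmat_apply_self (n : ℕ) (i : Fin n) : Cmat n i i =
    colScale n i * ((((n : ℝ) - i - 1) * (alpha (i + 1) - 1) + 1 + alpha (i + 1)) / 2) := by
  rw [Cmat, generalCoord_self]

lemma cast_sub_cast_sub_one_nonneg {n : ℕ} (i : Fin n) : 0 ≤ (n : ℝ) - i - 1 := by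
  have hi : (i : ℝ) + 1 ≤ n := mod_cast i.isLt
  linarith

lemma Qhat_transpose_mul_Lmat_apply_self_pos (n : ℕ) (i : Fin n) :
    0 < ((Qhat n)ᵀ * Lmat n) i i := by
  have hα : 0 ≤ 2 * alpha (i + 1) - 1 := by linarith [one_le_alpha (i + 1)]
  have hprod := mul_nonneg (cast_sub_cast_sub_one_nonneg i) hα
  rw [Qhat_transpose_mul_Lmat_apply_self]
  exact mul_pos (colScale_pos n i) (by linarith)

lemma Cmat_apply_self_pos (n : ℕ) (i : Fin n) : 0 < Cmat n i i := by
  have hα := one_le_alpha (i + 1)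
  have hprod := mul_nonneg (cast_sub_cast_sub_one_nonneg i) (sub_nonneg.2 hα)
  rw [Cmat_apply_self]
  exact mul_pos (colScale_pos n i) (by linarith)

/-- The general entry of `D̂`, for `m` the number of rows below the diagonal, `a = α_j` and hence
`(a + 1) / 2 = 2 α_{j-1}`. -/
lemma Dhat_formula_eq_mul (m a : ℝ) :
    m ^ 2 * (a - 1) ^ 2 * (2 * a - 1) / (2 * a - 2) + m * (a ^ 2 + a - 1) + (a + 1) / 2 =
      (m * (2 * a - 1) + 1) * ((m * (a - 1) + 1 + a) / 2) := by
  rw [show 2 * a - 2 = 2 * (a - 1) by ring]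
  field_simp
  ring

lemma Dhat_apply_self (n : ℕ) (i : Fin n) :
    Dhat n i i = ((Qhat n)ᵀ * Lmat n) i i * Cmat n i i := by
  rw [Qhat_transpose_mul_Lmat_apply_self, Cmat_apply_self, Dhat, diagonal_apply_eq]
  obtain ⟨_ | i, hi⟩ := i
  · have hscale : colScale n 0 = 1 := by simp [colScale, alpha_one]
    simp only [if_true, hscale, zero_add, alpha_one, Nat.cast_zero]
    ring
  have hα := alpha_add_two i
  rw [if_neg (by simp)]
  by_cases hpen : i + 1 + 2 = n
  · have hn : (n : ℝ) = i + 3 := by rw [← hpen]; push_cast; ring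
    have hα_ne : alpha (i + 2) ≠ 0 := (alpha_pos _).ne'
    rw [if_pos (by simp only; omega), colScale_of_add_two_eq hpen, hn]
    push_cast
    field_simp
    ring
  rw [if_neg (by simp only; omega), colScale_of_add_two_ne hpen]
  by_cases hlast : i + 1 + 1 = n
  · have hn : (n : ℝ) = i + 2 := by rw [← hlast]; push_cast; ring
    rw [if_pos (by simp only; omega), show n - 1 = i + 1 by omega, hn]
    push_cast
    linear_combination (-1 / 2 : ℝ) * hα
  · rw [if_neg (by simp only; omega), one_mul, one_mul, ← Dhat_formula_eq_mul]
    linear_combination (-1 / 2 : ℝ) * hα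

lemma Dhat_apply_self_pos (n : ℕ) (i : Fin n) : 0 < Dhat n i i := by
  rw [Dhat_apply_self]
  exact mul_pos (Qhat_transpose_mul_Lmat_apply_self_pos n i) (Cmat_apply_self_pos n i)

theorem Qhat_transpose_mul_Qhat (n : ℕ) : (Qhat n)ᵀ * Qhat n = diagonal fun i => Dhat n i i := by
  simp only [Dhat_apply_self]
  exact transpose_mul_self_eq_diagonal (isUpperTriangular_Qhat_transpose_mul_Lmat n)
    (isUpperTriangular_Cmat n) (Lmat_mul_Cmat n)

theorem Qmat_transpose_mul_Qmat (n : ℕ) : (Qmat n)ᵀ * Qmat n = 1 :=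
  transpose_mul_self_normalized_eq_one (Dhat_apply_self_pos n) (Qhat_transpose_mul_Qhat n)

lemma Qmat_transpose (n : ℕ) :
    (Qmat n)ᵀ = (diagonal fun i => (√(Dhat n i i))⁻¹) * (Qhat n)ᵀ := by
  rw [Qmat, transpose_mul, diagonal_transpose]

/-- for `n ≥ 3`, `Q̂ᵀ L_n` is upper triangular with strictly positive diagonal;
consequently `Q_n = Q̂ D̂^{-1/2}` is orthogonal and is the orthogonal factor of the QR
factorization of `L_n`, with `R = D̂^{-1/2} Q̂ᵀ L_n` upper triangular with positive diagonal. -/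
theorem Qn_is_QR_factor_of_Ln (n : ℕ) (hn : 3 ≤ n) :
    (∀ i j : Fin n, j < i → ((Qhat n)ᵀ * Lmat n) i j = 0) ∧
    (∀ i : Fin n, 0 < ((Qhat n)ᵀ * Lmat n) i i) ∧
    (Qmat n)ᵀ * Qmat n = 1 ∧
    (∀ i j : Fin n, j < i →
      ((Matrix.diagonal fun m => (Real.sqrt (Dhat n m m))⁻¹) * (Qhat n)ᵀ * Lmat n) i j = 0) ∧
    (∀ i : Fin n,
      0 < ((Matrix.diagonal fun m => (Real.sqrt (Dhat n m m))⁻¹) * (Qhat n)ᵀ * Lmat n) i i) ∧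
    Lmat n =
      Qmat n * ((Matrix.diagonal fun m => (Real.sqrt (Dhat n m m))⁻¹) * (Qhat n)ᵀ * Lmat n) := by
  have hU := isUpperTriangular_Qhat_transpose_mul_Lmat n
  have hpos := Qhat_transpose_mul_Lmat_apply_self_pos n
  have horth := Qmat_transpose_mul_Qmat n
  refine ⟨fun i j hji => hU hji, hpos, horth, fun i j hji => ?_, fun i => ?_, ?_⟩
  · rw [Matrix.mul_assoc, diagonal_mul, hU hji, mul_zero]
  · rw [Matrix.mul_assoc, diagonal_mul]
    exact mul_pos (inv_pos.2 (Real.sqrt_pos.2 (Dhat_apply_self_pos n i))) (hpos i)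
  · rw [← Qmat_transpose, ← Matrix.mul_assoc, mul_eq_one_comm.1 horth, Matrix.one_mul]
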